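/- L² bound for the approximate velocity: define v^ε(x,t) = −(∂ₜφ(x,t)/|∇φ(x,t)|²) ∇φ(x,t) at points where ∇φ(x,t) ≠ 0, and v^ε(x,t) = 0 otherwise. Then ∫₀ᵀ ∫_Q |v^ε(x,t)|² ε |∇φ(x,t)|² dx dt ≤ E^ε(0). -/

import Mathlib

open MeasureTheory Real Function
open scoped RealInnerProductSpace

noncomputable section

abbrev Euc (d : ℕ) := EuclideanSpace ℝ (Fin d)

/-- The double-well potential `W(s) = (1-s²)²/2`. -/
def W (s : ℝ) : ℝ := (1 - s ^ 2) ^ 2 / 2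

/-- Its derivative `W'(s) = -2s(1-s²)`. -/
def Wp (s : ℝ) : ℝ := -2 * s * (1 - s ^ 2)

/-- `k(s) = ∫₀ˢ √(2W(r)) dr`. -/
def kfun (s : ℝ) : ℝ := ∫ r in (0:ℝ)..s, Real.sqrt (2 * W r)

/-- The unit cell `Q = [0,1)^d`. -/
def Qcell (d : ℕ) : Set (Euc d) := {x | ∀ i, x i ∈ Set.Ico (0:ℝ) 1}

/-- The Laplacian (sum of second partial derivatives). -/
def lap {d : ℕ} (f : Euc d → ℝ) (x : Euc d) : ℝ :=
  ∑ i : Fin d, fderiv ℝ (fun y => fderiv ℝ f y (EuclideanSpace.single i 1)) x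
    (EuclideanSpace.single i 1)

/-- The total energy `E^ε(t) = E_S^ε(t) + E_P^ε(t)`. -/
def Eeps (d : ℕ) (ε α : ℝ) (φ : Euc d → ℝ → ℝ) (lam : ℝ → ℝ) (t : ℝ) : ℝ :=
  (∫ x in Qcell d, (ε * ‖gradient (fun y => φ y t) x‖ ^ 2 / 2 + W (φ x t) / ε)) +
    ε ^ α / 2 * lam t ^ 2

open Classical in
/-- The approximate velocity vector `v^ε`. -/
def veps (d : ℕ) (φ : Euc d → ℝ → ℝ) (x : Euc d) (t : ℝ) : Euc d :=
  if gradient (fun y => φ y t) x ≠ 0 then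
    (-(deriv (φ x) t) / ‖gradient (fun y => φ y t) x‖ ^ 2) • gradient (fun y => φ y t) x
  else 0

/-- Closed unit cube in the pi type. -/
def Kc (d : ℕ) : Set (Fin d → ℝ) := Set.Icc 0 1

theorem isCompact_Kc (d : ℕ) : IsCompact (Kc d) := isCompact_Icc

theorem Q_int (d : ℕ) (g : Euc d → ℝ) :
    ∫ x in Qcell d, g x = ∫ y in Kc d, g (WithLp.toLp 2 y) := by
  have h := (PiLp.volume_preserving_toLp (Fin d)).setIntegral_preimage_emb
    (MeasurableEquiv.toLp 2 (Fin d → ℝ)).measurableEmbedding g (Qcell d)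
  rw [← h]
  apply setIntegral_congr_set
  have : (WithLp.toLp 2 ⁻¹' Qcell d : Set (Fin d → ℝ))
      = Set.univ.pi fun i => Set.Ico ((0 : Fin d → ℝ) i) ((1 : Fin d → ℝ) i) := by
    ext y; simp [Qcell]
  rw [this]
  exact Measure.univ_pi_Ico_ae_eq_Icc

theorem Kc_deriv (d : ℕ) (F F' : Euc d → ℝ → ℝ) (hF : Continuous (uncurry F))
    (hF' : Continuous (uncurry F')) (h : ∀ x t, HasDerivAt (F x) (F' x t) t) (t : ℝ) :
    HasDerivAt (fun t => ∫ x in Qcell d, F x t) (∫ x in Qcell d, F' x t) t := by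
  simp_rw [Q_int]
  have hc : Continuous (fun p : (Fin d → ℝ) × ℝ => F (WithLp.toLp 2 p.1) p.2) :=
    hF.comp (((PiLp.continuous_toLp 2 _).comp continuous_fst).prodMk continuous_snd)
  have hc' : Continuous (fun p : (Fin d → ℝ) × ℝ => F' (WithLp.toLp 2 p.1) p.2) :=
    hF'.comp (((PiLp.continuous_toLp 2 _).comp continuous_fst).prodMk continuous_snd)
  obtain ⟨M, hM⟩ := ((isCompact_Kc d).prod (isCompact_Icc (a := t - 1) (b := t + 1))).bddAbove_image
    hc'.norm.continuousOn
  have hfin : IsFiniteMeasure (volume.restrict (Kc d)) :=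
    ⟨by simpa using (isCompact_Kc d).measure_lt_top⟩
  refine (hasDerivAt_integral_of_dominated_loc_of_deriv_le (μ := volume.restrict (Kc d))
    (F := fun t y => F (WithLp.toLp 2 y) t) (F' := fun t y => F' (WithLp.toLp 2 y) t)
    (bound := fun _ => M) (s := Set.Icc (t - 1) (t + 1))
    (Icc_mem_nhds (by linarith) (by linarith)) ?_ ?_ ?_ ?_ (integrable_const _) ?_).2
  · refine Filter.Eventually.of_forall fun s => ?_
    exact (hc.comp (continuous_id.prodMk continuous_const)).aestronglyMeasurable
  · exact (hc.comp (continuous_id.prodMk continuous_const)).continuousOn.integrableOn_compact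
      (isCompact_Kc d)
  · exact (hc'.comp (continuous_id.prodMk continuous_const)).aestronglyMeasurable
  · filter_upwards [ae_restrict_mem measurableSet_Icc] with y hy s hs
    exact hM ⟨(y, s), ⟨hy, hs⟩, rfl⟩
  · exact Filter.Eventually.of_forall fun y s _ => h _ _

theorem Q_cont (d : ℕ) (F : Euc d → ℝ → ℝ) (hF : Continuous (uncurry F)) :
    Continuous (fun t => ∫ x in Qcell d, F x t) := by
  simp_rw [Q_int]
  refine continuous_parametric_integral_of_continuous
    (f := fun t (y : Fin d → ℝ) => F (WithLp.toLp 2 y) t) ?_ (isCompact_Kc d)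
  exact hF.comp (((PiLp.continuous_toLp 2 _).comp continuous_snd).prodMk continuous_fst)

theorem Q_integrable (d : ℕ) (g : Euc d → ℝ) (hg : Continuous g) :
    IntegrableOn g (Qcell d) := by
  have h1 : IsCompact ((WithLp.toLp 2 : (Fin d → ℝ) → Euc d) '' Kc d) :=
    (isCompact_Kc d).image (PiLp.continuous_toLp 2 _)
  refine (hg.continuousOn.integrableOn_compact h1).mono_set ?_
  intro x hx
  exact ⟨WithLp.ofLp x, ⟨fun i => (hx i).1, fun i => (hx i).2.le⟩, rfl⟩

theorem div_zero_int (d : ℕ) (hd : 2 ≤ d) (V : Fin d → Euc d → ℝ)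
    (hV : ∀ i, ContDiff ℝ 1 (V i))
    (hper : ∀ i x, V i (x + EuclideanSpace.single i 1) = V i x) :
    ∫ x in Qcell d, ∑ i, fderiv ℝ (V i) x (EuclideanSpace.single i 1) = 0 := by
  obtain ⟨n, rfl⟩ : ∃ n, d = n + 1 := ⟨d - 1, by omega⟩
  rw [Q_int]
  let L : (Fin (n+1) → ℝ) →L[ℝ] Euc (n+1) :=
    ((PiLp.continuousLinearEquiv 2 ℝ (fun _ : Fin (n+1) => ℝ)).symm : _ →L[ℝ] _)
  have hL : ∀ y, L y = WithLp.toLp 2 y := fun y => rfl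
  have hLc : Continuous L := L.continuous
  have key := integral_divergence_of_hasFDerivAt_off_countable' (0 : Fin (n+1) → ℝ) 1
    (fun i => zero_le_one) (fun i y => V i (L y))
    (fun i y => (fderiv ℝ (V i) (L y)).comp L) ∅ Set.countable_empty
    (fun i => ((hV i).continuous.comp hLc).continuousOn)
    (fun y _ i => ((hV i).differentiable one_ne_zero (L y)).hasFDerivAt.comp y L.hasFDerivAt)
    (by
      refine Continuous.integrableOn_Icc ?_
      refine continuous_finsetSum _ fun i _ => ?_
      exact (((hV i).continuous_fderiv one_ne_zero).comp hLc).clm_apply continuous_const)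
  have e1 : ∀ (i : Fin (n+1)), L (Pi.single i 1) = EuclideanSpace.single i 1 := fun i => rfl
  simp only [ContinuousLinearMap.comp_apply, e1] at key
  refine Eq.trans key ?_
  refine Finset.sum_eq_zero fun i _ => ?_
  rw [sub_eq_zero]
  congr 1
  ext x
  refine Eq.trans ?_ (hper i (L _))
  rw [← e1, ← map_add]
  congr 2
  ext j
  refine Fin.succAboveCases i ?_ (fun k => ?_) j <;> simp [Pi.single_apply]

theorem W_deriv (s : ℝ) : HasDerivAt W (Wp s) s := by
  have := ((((hasDerivAt_id s).pow 2).const_sub 1).pow 2).div_const 2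
  refine this.congr_deriv ?_
  simp [Wp]; ring

theorem W_cont : Continuous W := by unfold W; fun_prop
theorem Wp_cont : Continuous Wp := by unfold Wp; fun_prop

theorem W_nonneg (s : ℝ) : 0 ≤ W s := by unfold W; positivity

theorem k_deriv (s : ℝ) : HasDerivAt kfun (Real.sqrt (2 * W s)) s := by
  have hc : Continuous fun r => Real.sqrt (2 * W r) := by have := W_cont; fun_prop
  exact intervalIntegral.integral_hasDerivAt_right (hc.intervalIntegrable _ _)
    (hc.stronglyMeasurableAtFilter _ _) hc.continuousAt

theorem k_cont : Continuous kfun :=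
  continuous_iff_continuousAt.2 fun s => (k_deriv s).continuousAt

theorem grad_sq (d : ℕ) (f : Euc d → ℝ) (x : Euc d) :
    ‖gradient f x‖ ^ 2 = ∑ i, (fderiv ℝ f x (EuclideanSpace.single i 1)) ^ 2 := by
  rw [← (EuclideanSpace.basisFun (Fin d) ℝ).sum_sq_norm_inner_right]
  refine Finset.sum_congr rfl fun i _ => ?_
  rw [inner_gradient_right]
  simp

theorem energy_identity (d : ℕ) (hd : 2 ≤ d) (T ε α : ℝ) (hT : 0 < T) (hε : 0 < ε)
    (φ : Euc d → ℝ → ℝ)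
    (hφ : ContDiff ℝ (⊤ : ℕ∞) (Function.uncurry φ))
    (hper : ∀ (x : Euc d) (z : Fin d → ℤ) (t : ℝ),
      φ (x + (WithLp.equiv 2 (Fin d → ℝ)).symm fun i => (z i : ℝ)) t = φ x t)
    (lam : ℝ → ℝ)
    (hlam : ∀ t, lam t = ε ^ (-α) *
      ((∫ x in Qcell d, kfun (φ x 0)) - (∫ x in Qcell d, kfun (φ x t))))
    (hPDE : ∀ (x : Euc d), ∀ t ∈ Set.Ioo (0:ℝ) T,
      ε * deriv (φ x) t =
        ε * lap (fun y => φ y t) x - Wp (φ x t) / ε + lam t * Real.sqrt (2 * W (φ x t))) :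
    Continuous (fun p : Euc d × ℝ => deriv (φ p.1) p.2) ∧
    ∫ t in (0:ℝ)..T, (- ∫ x in Qcell d, ε * (deriv (φ x) t) ^ 2) =
      Eeps d ε α φ lam T - Eeps d ε α φ lam 0 := by
  set Φ := Function.uncurry φ with hΦ
  have hD : ContDiff ℝ (⊤ : ℕ∞) (fderiv ℝ Φ) := hφ.fderiv_right (by simp)
  have hDv : ∀ v, ContDiff ℝ (⊤ : ℕ∞) (fun p => fderiv ℝ Φ p v) := fun v =>
    hD.clm_apply contDiff_const
  set e : Fin d → Euc d := fun i => EuclideanSpace.single i 1 with he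
  set a : Fin d → Euc d × ℝ → ℝ := fun i p => fderiv ℝ Φ p (e i, 0) with ha
  set b : Euc d × ℝ → ℝ := fun p => fderiv ℝ Φ p (0, 1) with hb
  have has : ∀ i, ContDiff ℝ (⊤ : ℕ∞) (a i) := fun i => hDv _
  have hbs : ContDiff ℝ (⊤ : ℕ∞) b := hDv _
  -- slices
  have slx : ∀ (G : Euc d × ℝ → ℝ), ContDiff ℝ (⊤ : ℕ∞) G → ∀ x t v,
      fderiv ℝ (fun y => G (y, t)) x v = fderiv ℝ G (x, t) (v, 0) := by
    intro G hG x t v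
    have h1 : HasFDerivAt G (fderiv ℝ G (x, t)) (x, t) :=
      (hG.differentiable (by simp) _).hasFDerivAt
    have h2 := h1.comp x (hasFDerivAt_prodMk_left (𝕜 := ℝ) x t)
    have h3 := h2.fderiv
    change fderiv ℝ (fun y => G (y, t)) x = _ at h3
    rw [h3]; simp
  have slt : ∀ (G : Euc d × ℝ → ℝ), ContDiff ℝ (⊤ : ℕ∞) G → ∀ x t,
      HasDerivAt (fun s => G (x, s)) (fderiv ℝ G (x, t) (0, 1)) t := by
    intro G hG x t
    have h1 : HasFDerivAt G (fderiv ℝ G (x, t)) (x, t) :=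
      (hG.differentiable (by simp) _).hasFDerivAt
    exact h1.comp_hasDerivAt t ((hasDerivAt_const t x).prodMk (hasDerivAt_id t))
  have hφt : ∀ x t, HasDerivAt (φ x) (b (x, t)) t := fun x t => slt Φ hφ x t
  have hφt' : ∀ x t, deriv (φ x) t = b (x, t) := fun x t => (hφt x t).deriv
  have hφx : ∀ x t i, fderiv ℝ (fun y => φ y t) x (e i) = a i (x, t) := fun x t i =>
    slx Φ hφ x t (e i)
  have hsymm : ∀ p i, fderiv ℝ (a i) p (0, 1) = fderiv ℝ b p (e i, 0) := by
    intro p i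
    have hs : IsSymmSndFDerivAt ℝ Φ p := hφ.contDiffAt.isSymmSndFDerivAt (by
      simp only [minSmoothness_of_isRCLikeNormedField]; exact WithTop.coe_le_coe.2 (le_top : (2 : ℕ∞) ≤ ⊤))
    have hdd : DifferentiableAt ℝ (fderiv ℝ Φ) p := hD.differentiable (by simp) p
    have h1 : ∀ v w, fderiv ℝ (fun q => fderiv ℝ Φ q v) p w = fderiv ℝ (fderiv ℝ Φ) p w v := by
      intro v w
      rw [fderiv_clm_apply hdd (differentiableAt_const v)]
      simp
    rw [ha, hb]
    simp only [h1]
    exact hs.eq _ _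
  have hlap : ∀ x t, lap (fun y => φ y t) x = ∑ i, fderiv ℝ (a i) (x, t) (e i, 0) := by
    intro x t
    unfold lap
    refine Finset.sum_congr rfl fun i _ => ?_
    have : (fun y => fderiv ℝ (fun y => φ y t) y (EuclideanSpace.single i 1))
        = fun y => a i (y, t) := by
      ext y; exact hφx y t i
    rw [this]
    exact slx _ (has i) x t _
  have hcΦ : Continuous Φ := hφ.continuous
  have hca : ∀ i, Continuous (a i) := fun i => (has i).continuous
  have hcb : Continuous b := hbs.continuous
  have hcfd : ∀ (G : Euc d × ℝ → ℝ), ContDiff ℝ (⊤ : ℕ∞) G → ∀ v,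
      Continuous fun p => fderiv ℝ G p v := fun G hG v =>
    (hG.continuous_fderiv (by simp)).clm_apply continuous_const
  refine ⟨by simpa only [hφt'] using hcb, ?_⟩
  -- periodicity
  have hperΦ : ∀ i x t, Φ (x + e i, t) = Φ (x, t) := by
    intro i x t
    have := hper x (Pi.single i 1) t
    have h2 : ((WithLp.equiv 2 (Fin d → ℝ)).symm fun j => ((Pi.single i 1 : Fin d → ℤ) j : ℝ))
        = e i := by
      ext j; simp [he, Pi.single_apply]
    rw [h2] at this
    exact this
  have hperD : ∀ i x t, fderiv ℝ Φ (x + e i, t) = fderiv ℝ Φ (x, t) := by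
    intro i x t
    have h1 : (fun p => Φ (p + (e i, 0))) = Φ := by
      ext ⟨y, s⟩; simpa using hperΦ i y s
    have h2 := fderiv_comp_add_right (𝕜 := ℝ) (f := Φ) (x := (x, t)) (e i, (0:ℝ))
    rw [h1] at h2
    simpa using h2.symm
  -- derivative of the surface energy
  have hS : ∀ t, HasDerivAt
      (fun t => ∫ x in Qcell d, (ε * ‖gradient (fun y => φ y t) x‖ ^ 2 / 2 + W (φ x t) / ε))
      (∫ x in Qcell d, (ε * (∑ i, a i (x, t) * fderiv ℝ b (x, t) (e i, 0))
        + Wp (Φ (x, t)) * b (x, t) / ε)) t := by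
    intro t
    have h0 : ∀ x t, ε * ‖gradient (fun y => φ y t) x‖ ^ 2 / 2 + W (φ x t) / ε
        = ε * (∑ i, a i (x, t) ^ 2) / 2 + W (Φ (x, t)) / ε := by
      intro x t
      rw [grad_sq]
      simp only [← hφx]
      rfl
    simp only [h0]
    refine Kc_deriv d (fun x t => ε * (∑ i, a i (x, t) ^ 2) / 2 + W (Φ (x, t)) / ε)
      (fun x t => ε * (∑ i, a i (x, t) * fderiv ℝ b (x, t) (e i, 0))
        + Wp (Φ (x, t)) * b (x, t) / ε) ?_ ?_ ?_ t
    · change Continuous fun p : Euc d × ℝ => ε * (∑ i, a i p ^ 2) / 2 + W (Φ p) / ε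
      have := W_cont
      fun_prop
    · change Continuous fun p : Euc d × ℝ => ε * (∑ i, a i p * fderiv ℝ b p (e i, 0))
        + Wp (Φ p) * b p / ε
      have h1 := Wp_cont
      have h2 := fun i => hcfd b hbs (e i, 0)
      fun_prop
    · intro x t
      have h1 : HasDerivAt (fun t => ∑ i, a i (x, t) ^ 2)
          (∑ i, 2 * (a i (x, t) * fderiv ℝ b (x, t) (e i, 0))) t := by
        refine HasDerivAt.fun_sum fun i _ => ?_
        refine ((slt (a i) (has i) x t).pow 2).congr_deriv ?_
        rw [hsymm]; simp; ring
      have h2 : HasDerivAt (fun t => W (Φ (x, t))) (Wp (Φ (x, t)) * b (x, t)) t :=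
        (W_deriv (Φ (x, t))).comp t (hφt x t)
      refine (((h1.const_mul ε).div_const 2).add (h2.div_const ε)).congr_deriv ?_
      rw [← Finset.mul_sum]; ring
  have hlamd : ∀ t, HasDerivAt lam
      (ε ^ (-α) * (- ∫ x in Qcell d, Real.sqrt (2 * W (Φ (x, t))) * b (x, t))) t := by
    intro t
    have : lam = fun t => ε ^ (-α) *
      ((∫ x in Qcell d, kfun (φ x 0)) - (∫ x in Qcell d, kfun (φ x t))) := funext hlam
    rw [this]
    refine HasDerivAt.const_mul _ (HasDerivAt.const_sub _ ?_)
    refine Kc_deriv d (fun x t => kfun (φ x t))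
      (fun x t => Real.sqrt (2 * W (Φ (x, t))) * b (x, t)) ?_ ?_ ?_ t
    · exact k_cont.comp hcΦ
    · change Continuous fun p : Euc d × ℝ => Real.sqrt (2 * W (Φ p)) * b p
      have := W_cont
      fun_prop
    · intro x t
      exact (k_deriv (Φ (x, t))).comp t (hφt x t)
  have hE : ∀ t, HasDerivAt (Eeps d ε α φ lam) ((∫ x in Qcell d,
        (ε * (∑ i, a i (x, t) * fderiv ℝ b (x, t) (e i, 0)) + Wp (Φ (x, t)) * b (x, t) / ε))
      - lam t * ∫ x in Qcell d, Real.sqrt (2 * W (Φ (x, t))) * b (x, t)) t := by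
    intro t
    refine ((hS t).add (((hlamd t).pow 2).const_mul (ε ^ α / 2))).congr_deriv ?_
    have h1 : ε ^ α * ε ^ (-α) = 1 := by rw [← Real.rpow_add hε]; simp
    simp only [Nat.cast_ofNat, Nat.add_one_sub_one, pow_one]
    linear_combination (- lam t * ∫ x in Qcell d, Real.sqrt (2 * W (Φ (x, t))) * b (x, t)) * h1
  refine intervalIntegral.integral_eq_sub_of_hasDerivAt_of_le hT.le
    (fun t _ => (hE t).continuousAt.continuousWithinAt) ?_ ?_
  · intro t ht
    refine (hE t).congr_deriv ?_
    have hct : Continuous fun x : Euc d => (x, t) := continuous_id.prodMk continuous_const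
    have hsmt : ContDiff ℝ (⊤ : ℕ∞) fun x : Euc d => (x, t) := contDiff_id.prodMk contDiff_const
    have hdiv := div_zero_int d hd (fun i x => b (x, t) * a i (x, t))
      (fun i => ((hbs.comp hsmt).mul ((has i).comp hsmt)).of_le (by simp))
      (fun i x => by
        change b (x + e i, t) * a i (x + e i, t) = _
        simp only [ha, hb, hperD])
    have hpt : ∀ x, ε * (∑ i, a i (x, t) * fderiv ℝ b (x, t) (e i, 0))
          + Wp (Φ (x, t)) * b (x, t) / ε
        = ε * (∑ i, fderiv ℝ (fun x => b (x, t) * a i (x, t)) x (EuclideanSpace.single i 1))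
          + lam t * (Real.sqrt (2 * W (Φ (x, t))) * b (x, t)) - ε * deriv (φ x) t ^ 2 := by
      intro x
      have h1 : ∀ i, fderiv ℝ (fun x => b (x, t) * a i (x, t)) x (EuclideanSpace.single i 1)
          = a i (x, t) * fderiv ℝ b (x, t) (e i, 0)
            + b (x, t) * fderiv ℝ (a i) (x, t) (e i, 0) := by
        intro i
        rw [slx (fun p => b p * a i p) (hbs.mul (has i)) x t,
          fderiv_fun_mul (hbs.differentiable (by simp) _) ((has i).differentiable (by simp) _)]
        simp only [add_apply, smul_apply, smul_eq_mul]
        ring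
      have h2 := hPDE x t ht
      rw [hlap, hφt'] at h2
      simp only [h1, Finset.sum_add_distrib, ← Finset.mul_sum, hφt']
      change _ = ε * _ - Wp (Φ (x, t)) / ε + lam t * Real.sqrt (2 * W (Φ (x, t))) at h2
      linear_combination b (x, t) * h2
    simp only [hpt]
    have i1 : IntegrableOn (fun x => ε * (∑ i, fderiv ℝ (fun x => b (x, t) * a i (x, t)) x
        (EuclideanSpace.single i 1))) (Qcell d) := by
      refine Q_integrable d _ (continuous_const.mul (continuous_finsetSum _ fun i _ => ?_))
      exact (((hbs.comp hsmt).mul ((has i).comp hsmt)).continuous_fderiv (by simp)).clm_apply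
        continuous_const
    have hcW := W_cont
    have i2 : IntegrableOn (fun x => lam t * (Real.sqrt (2 * W (Φ (x, t))) * b (x, t)))
        (Qcell d) := Q_integrable d _ (by fun_prop)
    have i3 : IntegrableOn (fun x => ε * deriv (φ x) t ^ 2) (Qcell d) := by
      simp only [hφt']; exact Q_integrable d _ (by fun_prop)
    rw [integral_sub ?_ i3, integral_add i1 i2, integral_const_mul, hdiv,
      integral_const_mul]
    · ring
    · exact i1.add i2
  · refine Continuous.intervalIntegrable (Continuous.neg (Q_cont d _ ?_)) _ _
    simp only [hφt']
    change Continuous fun p : Euc d × ℝ => ε * b p ^ 2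
    fun_prop

/-- `L²` bound for the approximate velocity. -/
theorem stmt5 (d : ℕ) (hd : 2 ≤ d) (T ε α : ℝ) (hT : 0 < T) (hε : 0 < ε)
    (hα : α ∈ Set.Ioo (0:ℝ) 1)
    (φ : Euc d → ℝ → ℝ)
    (hφ : ContDiff ℝ (⊤ : ℕ∞) (Function.uncurry φ))
    (hper : ∀ (x : Euc d) (z : Fin d → ℤ) (t : ℝ),
      φ (x + (WithLp.equiv 2 (Fin d → ℝ)).symm fun i => (z i : ℝ)) t = φ x t)
    (lam : ℝ → ℝ)
    (hlam : ∀ t, lam t = ε ^ (-α) *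
      ((∫ x in Qcell d, kfun (φ x 0)) - (∫ x in Qcell d, kfun (φ x t))))
    (hPDE : ∀ (x : Euc d), ∀ t ∈ Set.Ioo (0:ℝ) T,
      ε * deriv (φ x) t =
        ε * lap (fun y => φ y t) x - Wp (φ x t) / ε + lam t * Real.sqrt (2 * W (φ x t))) :
    (∫ t in (0:ℝ)..T, ∫ x in Qcell d,
        ‖veps d φ x t‖ ^ 2 * (ε * ‖gradient (fun y => φ y t) x‖ ^ 2)) ≤
      Eeps d ε α φ lam 0 := by
  obtain ⟨hc, hE⟩ := energy_identity d hd T ε α hT hε φ hφ hper lam hlam hPDE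
  have hnn : ∀ t x, 0 ≤ ‖veps d φ x t‖ ^ 2 * (ε * ‖gradient (fun y => φ y t) x‖ ^ 2) :=
    fun t x => by positivity
  have hle : ∀ t x, ‖veps d φ x t‖ ^ 2 * (ε * ‖gradient (fun y => φ y t) x‖ ^ 2)
      ≤ ε * deriv (φ x) t ^ 2 := by
    intro t x
    unfold veps
    split_ifs with h
    · have hn : ‖gradient (fun y => φ y t) x‖ ≠ 0 := norm_ne_zero_iff.2 h
      rw [norm_smul, mul_pow, Real.norm_eq_abs, sq_abs]
      refine le_of_eq ?_
      field_simp
    · have : (0:ℝ) ≤ ε * deriv (φ x) t ^ 2 := by positivity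
      simpa using this
  have hc2 : Continuous (uncurry fun (x : Euc d) t => ε * deriv (φ x) t ^ 2) :=
    continuous_const.mul (hc.pow 2)
  have h1 : ∀ t, ∫ x in Qcell d, ‖veps d φ x t‖ ^ 2 * (ε * ‖gradient (fun y => φ y t) x‖ ^ 2)
      ≤ ∫ x in Qcell d, ε * deriv (φ x) t ^ 2 := fun t =>
    integral_mono_of_nonneg (Filter.Eventually.of_forall (hnn t))
      (Q_integrable d _ (hc2.comp (continuous_id.prodMk continuous_const)))
      (Filter.Eventually.of_forall (hle t))
  have h2 : (∫ t in (0:ℝ)..T, ∫ x in Qcell d,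
        ‖veps d φ x t‖ ^ 2 * (ε * ‖gradient (fun y => φ y t) x‖ ^ 2))
      ≤ ∫ t in (0:ℝ)..T, ∫ x in Qcell d, ε * deriv (φ x) t ^ 2 := by
    rw [intervalIntegral.integral_of_le hT.le, intervalIntegral.integral_of_le hT.le]
    refine integral_mono_of_nonneg
      (Filter.Eventually.of_forall fun t => integral_nonneg (hnn t)) ?_
      (Filter.Eventually.of_forall h1)
    exact ((Q_cont d _ hc2).intervalIntegrable 0 T).1
  have h3 : 0 ≤ Eeps d ε α φ lam T := by
    unfold Eeps
    refine add_nonneg (integral_nonneg fun x => ?_) ?_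
    · have := W_nonneg (φ x T)
      positivity
    · have := Real.rpow_pos_of_pos hε α
      positivity
  rw [intervalIntegral.integral_neg] at hE
  linarith
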